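/- If K and C are o-symmetric convex bodies in ℝⁿ with |C| = |K|, then A(K,C) = |K Δ C| / |K|; that is, the minimum of |αK Δ (x+αC)| over x ∈ ℝⁿ, where α = |K|^{−1/n}, is attained at x = 0. -/

import Mathlib

open MeasureTheory Pointwise

noncomputable section

/-- The homothetic distance `A(K,C)`: with `α = |K|^(−1/n)` and `β = |C|^(−1/n)`,
`A(K,C) = inf{|αK Δ (x+βC)| : x ∈ ℝⁿ}`. -/
def homDist {n : ℕ} (K C : Set (EuclideanSpace ℝ (Fin n))) : ℝ :=
  sInf {r : ℝ | ∃ x : EuclideanSpace ℝ (Fin n),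
    r = (volume (symmDiff (((volume K).toReal ^ (-(1:ℝ)/(n:ℝ))) • K)
          ({x} + ((volume C).toReal ^ (-(1:ℝ)/(n:ℝ))) • C))).toReal}


theorem bm1_compact (A B D : Set ℝ) (hA : IsCompact A) (hB : IsCompact B)
    (hA0 : A.Nonempty) (hB0 : B.Nonempty)
    (h : ∀ a ∈ A, ∀ b ∈ B, a + b ∈ D) : volume A + volume B ≤ volume D := by
  obtain ⟨a, ha, hamax⟩ := hA.exists_isGreatest hA0
  obtain ⟨b, hb, hbmin⟩ := hB.exists_isLeast hB0
  have h1 : volume ((fun x => x + (-b)) ⁻¹' A) = volume A := measure_preimage_add_right _ _ _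
  have h2 : volume ((fun x => x + (-a)) ⁻¹' B) = volume B := measure_preimage_add_right _ _ _
  have hm : MeasurableSet ((fun x => x + (-a)) ⁻¹' B) :=
    (measurable_add_const _) hB.measurableSet
  rw [← h1, ← h2, ← measure_union_add_inter _ hm]
  have h3 : volume ((fun x => x + (-b)) ⁻¹' A ∩ (fun x => x + (-a)) ⁻¹' B) = 0 := by
    apply measure_mono_null (t := {a + b})
    · rintro x ⟨hx1, hx2⟩
      have := hamax hx1
      have := hbmin hx2
      simp only [Set.mem_singleton_iff]
      linarith
    · simp
  rw [h3, add_zero]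
  apply measure_mono
  rintro x (hx | hx)
  · have := h _ hx b hb
    simpa using this
  · have := h a ha _ hx
    simpa using this

theorem bm1' (A B D : Set ℝ) (hA : MeasurableSet A) (hB : MeasurableSet B)
    (hA0 : A.Nonempty) (hB0 : B.Nonempty)
    (h : ∀ a ∈ A, ∀ b ∈ B, a + b ∈ D) : volume A + volume B ≤ volume D := by
  obtain ⟨a, ha⟩ := hA0
  obtain ⟨b, hb⟩ := hB0
  have h1 : volume A ≤ volume D := by
    rw [← measure_preimage_add_right volume (-b) A]
    apply measure_mono
    intro x hx
    simpa using h _ hx b hb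
  have h2 : volume B ≤ volume D := by
    rw [← measure_preimage_add_right volume (-a) B]
    apply measure_mono
    intro x hx
    simpa using h a ha _ hx
  by_cases hD : volume D = ⊤
  · simp [hD]
  have hA' : volume A ≠ ⊤ := ne_top_of_le_ne_top hD h1
  have hB' : volume B ≠ ⊤ := ne_top_of_le_ne_top hD h2
  apply ENNReal.le_of_forall_pos_le_add
  intro ε hε _
  have hε' : ((ε / 2 : NNReal) : ENNReal) ≠ 0 := by
    simpa using hε.ne'
  obtain ⟨K, hKA, hK, hKe⟩ := hA.exists_isCompact_lt_add hA' hε'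
  obtain ⟨L, hLB, hL, hLe⟩ := hB.exists_isCompact_lt_add hB' hε'
  have := bm1_compact (insert a K) (insert b L) D (hK.insert a) (hL.insert b) ⟨a, by simp⟩
    ⟨b, by simp⟩ (by
      intro x hx y hy
      exact h x (Set.insert_subset ha hKA hx) y (Set.insert_subset hb hLB hy))
  calc volume A + volume B ≤ (volume K + (ε / 2 : NNReal)) + (volume L + (ε / 2 : NNReal)) :=
        add_le_add hKe.le hLe.le
    _ = (volume K + volume L) + ((ε / 2 : NNReal) + (ε / 2 : NNReal) : ENNReal) := by ring
    _ = (volume K + volume L) + ε := by rw [← ENNReal.coe_add, add_halves]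
    _ ≤ _ := by
      gcongr
      refine le_trans (add_le_add (measure_mono (Set.subset_insert a K))
        (measure_mono (Set.subset_insert b L))) this

theorem bm1 (A B D : Set ℝ) (hA : MeasurableSet A) (hB : MeasurableSet B)
    (hA0 : A.Nonempty) (hB0 : B.Nonempty)
    (h : ∀ a ∈ A, ∀ b ∈ B, (1/2 : ℝ) * (a + b) ∈ D) :
    volume A + volume B ≤ 2 * volume D := by
  have := bm1' A B ((fun x => (1/2 : ℝ) * x) ⁻¹' D) hA hB hA0 hB0 h
  rw [Real.volume_preimage_mul_left (by norm_num)] at this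
  simpa using this

theorem pl_norm (f g h : ℝ → ℝ) (hf : Measurable f) (hg : Measurable g) (hh : Measurable h)
    (hf0 : ∀ x, 0 ≤ f x) (hg0 : ∀ x, 0 ≤ g x) (hh0 : ∀ x, 0 ≤ h x)
    (hf1 : ∀ x, f x ≤ 1) (hg1 : ∀ x, g x ≤ 1)
    (hfs : ∀ t < 1, ∃ x, t < f x) (hgs : ∀ t < 1, ∃ x, t < g x)
    (H : ∀ s t, f s * g t ≤ h ((1/2 : ℝ) * (s + t)) ^ 2) :
    (∫⁻ x, ENNReal.ofReal (f x)) + (∫⁻ x, ENNReal.ofReal (g x))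
      ≤ 2 * ∫⁻ x, ENNReal.ofReal (h x) := by
  rw [lintegral_eq_lintegral_meas_lt _ (ae_of_all _ hf0) hf.aemeasurable,
    lintegral_eq_lintegral_meas_lt _ (ae_of_all _ hg0) hg.aemeasurable,
    lintegral_eq_lintegral_meas_lt _ (ae_of_all _ hh0) hh.aemeasurable]
  have mf : Measurable fun t => volume {a | t < f a} := by
    apply Antitone.measurable
    intro s t hst
    exact measure_mono fun x hx => lt_of_le_of_lt hst hx
  have mh : Measurable fun t => volume {a | t < h a} := by
    apply Antitone.measurable
    intro s t hst
    exact measure_mono fun x hx => lt_of_le_of_lt hst hx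
  rw [← lintegral_add_left mf, ← lintegral_const_mul _ mh]
  apply setLIntegral_mono (mh.const_mul _)
  intro t ht
  have ht : 0 < t := ht
  by_cases h1 : t < 1
  · apply bm1 _ _ _ (measurableSet_lt measurable_const hf) (measurableSet_lt measurable_const hg)
      (hfs t h1) (hgs t h1)
    intro a ha b hb
    have ha : t < f a := ha
    have hb : t < g b := hb
    have := H a b
    have h3 : t * t < f a * g b := by nlinarith
    refine lt_of_pow_lt_pow_left₀ 2 (hh0 _) ?_
    nlinarith
  · have e1 : {a | t < f a} = ∅ := by
      ext x; simpa using (hf1 x).trans (not_lt.1 h1)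
    have e2 : {a | t < g a} = ∅ := by
      ext x; simpa using (hg1 x).trans (not_lt.1 h1)
    simp [e1, e2]

theorem lint_scale (f : ℝ → ℝ) (c : ℝ) (hc : 0 < c) :
    (∫⁻ x, ENNReal.ofReal (f x)) = ENNReal.ofReal c * ∫⁻ x, ENNReal.ofReal (f x / c) := by
  rw [← lintegral_const_mul' _ _ ENNReal.ofReal_ne_top]
  congr 1; ext x
  rw [← ENNReal.ofReal_mul hc.le]
  congr 1; field_simp

theorem amgm (a b : ENNReal) : 4 * (a * b) ≤ (a + b) ^ 2 := by
  by_cases ha : a = ⊤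
  · subst ha; simp
  by_cases hb : b = ⊤
  · subst hb; simp
  lift a to NNReal using ha
  lift b to NNReal using hb
  norm_cast
  rw [← NNReal.coe_le_coe]; push_cast
  nlinarith [sq_nonneg ((a:ℝ) - b)]

theorem pl (f g h : ℝ → ℝ) (hf : Measurable f) (hg : Measurable g) (hh : Measurable h)
    (hf0 : ∀ x, 0 ≤ f x) (hg0 : ∀ x, 0 ≤ g x) (hh0 : ∀ x, 0 ≤ h x)
    (M : ℝ) (hf1 : ∀ x, f x ≤ M) (hg1 : ∀ x, g x ≤ M)
    (H : ∀ s t, f s * g t ≤ h ((1/2 : ℝ) * (s + t)) ^ 2) :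
    (∫⁻ x, ENNReal.ofReal (f x)) * (∫⁻ x, ENNReal.ofReal (g x))
      ≤ (∫⁻ x, ENNReal.ofReal (h x)) ^ 2 := by
  have bf : BddAbove (Set.range f) := ⟨M, by rintro _ ⟨x, rfl⟩; exact hf1 x⟩
  have bg : BddAbove (Set.range g) := ⟨M, by rintro _ ⟨x, rfl⟩; exact hg1 x⟩
  by_cases hF : ∃ x, 0 < f x
  swap
  · push Not at hF
    simp [fun x => ENNReal.ofReal_of_nonpos (hF x)]
  by_cases hG : ∃ x, 0 < g x
  swap
  · push Not at hG
    simp [fun x => ENNReal.ofReal_of_nonpos (hG x)]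
  obtain ⟨x0, hx0⟩ := hF
  obtain ⟨y0, hy0⟩ := hG
  set F := ⨆ x, f x
  set G := ⨆ x, g x
  have hFf : ∀ x, f x ≤ F := le_ciSup bf
  have hGg : ∀ x, g x ≤ G := le_ciSup bg
  have F0 : 0 < F := hx0.trans_le (hFf _)
  have G0 : 0 < G := hy0.trans_le (hGg _)
  set S := Real.sqrt (F * G)
  have S0 : 0 < S := Real.sqrt_pos.2 (by positivity)
  have SS : S ^ 2 = F * G := Real.sq_sqrt (by positivity)
  have key := pl_norm (fun x => f x / F) (fun x => g x / G) (fun x => h x / S)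
    (hf.div_const _) (hg.div_const _) (hh.div_const _)
    (fun x => div_nonneg (hf0 x) F0.le) (fun x => div_nonneg (hg0 x) G0.le)
    (fun x => div_nonneg (hh0 x) S0.le)
    (fun x => (div_le_one F0).2 (hFf x)) (fun x => (div_le_one G0).2 (hGg x))
    (fun t ht => by
      obtain ⟨x, hx⟩ := exists_lt_of_lt_ciSup (show t * F < ⨆ x, f x by
        change t * F < F; nlinarith)
      exact ⟨x, (lt_div_iff₀ F0).2 hx⟩)
    (fun t ht => by
      obtain ⟨x, hx⟩ := exists_lt_of_lt_ciSup (show t * G < ⨆ x, g x by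
        change t * G < G; nlinarith)
      exact ⟨x, (lt_div_iff₀ G0).2 hx⟩)
    (fun s t => by
      rw [div_pow, SS, div_mul_div_comm]
      gcongr
      exact H s t)
  rw [lint_scale f F F0, lint_scale g G G0, lint_scale h S S0]
  set a := ∫⁻ x, ENNReal.ofReal (f x / F)
  set b := ∫⁻ x, ENNReal.ofReal (g x / G)
  set c := ∫⁻ x, ENNReal.ofReal (h x / S)
  have h4 : a * b ≤ c ^ 2 := by
    have h5 : 4 * (a * b) ≤ 4 * c ^ 2 := by
      calc _ ≤ (a + b) ^ 2 := amgm a b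
        _ ≤ (2 * c) ^ 2 := by gcongr
        _ = _ := by ring
    exact (ENNReal.mul_le_mul_iff_right (by norm_num) (by norm_num)).1 h5
  calc _ = ENNReal.ofReal F * ENNReal.ofReal G * (a * b) := by ring
    _ ≤ ENNReal.ofReal F * ENNReal.ofReal G * c ^ 2 := by gcongr
    _ = _ := by rw [← ENNReal.ofReal_mul F0.le, ← SS, ENNReal.ofReal_pow S0.le]; ring

theorem vol_bd {n : ℕ} (R : ℝ) (A : Set (Fin n → ℝ)) (hA : ∀ a ∈ A, ∀ i, |a i| ≤ R) :
    volume A ≤ volume (Set.Icc (fun _ : Fin n => -R) (fun _ => R)) :=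
  measure_mono fun a ha => ⟨fun i => (abs_le.1 (hA a ha i)).1, fun i => (abs_le.1 (hA a ha i)).2⟩

theorem vol_fin {n : ℕ} (R : ℝ) : volume (Set.Icc (fun _ : Fin n => -R) (fun _ => R)) ≠ ⊤ :=
  isCompact_Icc.measure_lt_top.ne

theorem vol_slice {n : ℕ} (A : Set (Fin (n+1) → ℝ)) (hA : MeasurableSet A) :
    volume A = ∫⁻ s : ℝ, volume {x : Fin n → ℝ | (Fin.cons s x : Fin (n+1) → ℝ) ∈ A} ∧
    Measurable (fun s : ℝ => volume {x : Fin n → ℝ | (Fin.cons s x : Fin (n+1) → ℝ) ∈ A}) ∧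
    ∀ s : ℝ, MeasurableSet {x : Fin n → ℝ | (Fin.cons s x : Fin (n+1) → ℝ) ∈ A} := by
  have e := (volume_preserving_piFinSuccAbove (fun _ : Fin (n+1) => ℝ) 0).symm
  have hm := e.measurable hA
  have h1 := e.measure_preimage hA.nullMeasurableSet
  have hs : ∀ s : ℝ, {x : Fin n → ℝ | (Fin.cons s x : Fin (n+1) → ℝ) ∈ A} =
    Prod.mk s ⁻¹' ((MeasurableEquiv.piFinSuccAbove (fun _ : Fin (n+1) => ℝ) 0).symm ⁻¹' A) := by
    intro s; ext x
    simp [MeasurableEquiv.piFinSuccAbove, Fin.insertNthEquiv]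
  simp only [hs]
  refine ⟨?_, measurable_measure_prodMk_left hm, fun s => measurable_prodMk_left hm⟩
  rw [← h1]
  exact Measure.prod_apply hm

theorem bm {n : ℕ} (R : ℝ) : ∀ (A B D : Set (Fin n → ℝ)), MeasurableSet A → MeasurableSet B →
    MeasurableSet D → (∀ a ∈ A, ∀ i, |a i| ≤ R) → (∀ a ∈ B, ∀ i, |a i| ≤ R) →
    (∀ a ∈ D, ∀ i, |a i| ≤ R) → (∀ a ∈ A, ∀ b ∈ B, (1/2 : ℝ) • (a + b) ∈ D) →
    volume A * volume B ≤ volume D ^ 2 := by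
  induction n with
  | zero =>
    intro A B D _ _ _ _ _ _ h
    rcases A.eq_empty_or_nonempty with rfl | ⟨a, ha⟩
    · simp
    rcases B.eq_empty_or_nonempty with rfl | ⟨b, hb⟩
    · simp
    have : D = Set.univ := Set.eq_univ_of_forall fun x => by
      have := h a ha b hb
      rwa [Subsingleton.elim x]
    have hA : A = Set.univ := Set.eq_univ_of_forall fun x => by rwa [Subsingleton.elim x a]
    have hB : B = Set.univ := Set.eq_univ_of_forall fun x => by rwa [Subsingleton.elim x b]
    rw [this, hA, hB, sq]
  | succ n ih =>
    intro A B D hA hB hD bA bB bD h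
    obtain ⟨A1, A2, A3⟩ := vol_slice A hA
    obtain ⟨B1, B2, B3⟩ := vol_slice B hB
    obtain ⟨D1, D2, D3⟩ := vol_slice D hD
    have sb : ∀ X : Set (Fin (n+1) → ℝ), (∀ a ∈ X, ∀ i, |a i| ≤ R) → ∀ s : ℝ,
        ∀ a ∈ {x : Fin n → ℝ | (Fin.cons s x : Fin (n+1) → ℝ) ∈ X}, ∀ i, |a i| ≤ R := by
      intro X hX s a ha i
      simpa using hX _ ha i.succ
    have fin : ∀ X : Set (Fin (n+1) → ℝ), (∀ a ∈ X, ∀ i, |a i| ≤ R) → ∀ s : ℝ,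
        volume {x : Fin n → ℝ | (Fin.cons s x : Fin (n+1) → ℝ) ∈ X} ≠ ⊤ := fun X hX s =>
      ne_top_of_le_ne_top (vol_fin R) (vol_bd R _ (sb X hX s))
    have key := pl _ _ _ A2.ennreal_toReal B2.ennreal_toReal D2.ennreal_toReal
      (fun _ => ENNReal.toReal_nonneg) (fun _ => ENNReal.toReal_nonneg)
      (fun _ => ENNReal.toReal_nonneg)
      (volume (Set.Icc (fun _ : Fin n => -R) (fun _ => R))).toReal
      (fun s => ENNReal.toReal_mono (vol_fin R) (vol_bd R _ (sb A bA s)))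
      (fun s => ENNReal.toReal_mono (vol_fin R) (vol_bd R _ (sb B bB s)))
      (fun s t => by
        rw [← ENNReal.toReal_mul, ← ENNReal.toReal_pow]
        apply ENNReal.toReal_mono (ENNReal.pow_ne_top (fin D bD _))
        apply ih _ _ _ (A3 s) (B3 t) (D3 _) (sb A bA s) (sb B bB t) (sb D bD _)
        intro a ha b hb
        have := h _ ha _ hb
        simp only [Set.mem_ofPred_eq]
        convert this using 1
        ext i
        refine Fin.cases ?_ (fun j => ?_) i <;> simp <;> ring)
    simp only [ENNReal.ofReal_toReal (fin A bA _), ENNReal.ofReal_toReal (fin B bB _),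
      ENNReal.ofReal_toReal (fin D bD _)] at key
    rwa [← A1, ← B1, ← D1] at key

abbrev E (n : ℕ) := EuclideanSpace ℝ (Fin n)

theorem bmE {n : ℕ} (A B D : Set (E n)) (hA : IsCompact A) (hB : IsCompact B)
    (hD : IsCompact D) (h : ∀ a ∈ A, ∀ b ∈ B, (1/2 : ℝ) • (a + b) ∈ D) :
    volume A * volume B ≤ volume D ^ 2 := by
  obtain ⟨R, hR⟩ := ((hA.union hB).union hD).isBounded.exists_norm_le
  have e := PiLp.volume_preserving_toLp (Fin n)
  have hb : ∀ X : Set (E n), X ⊆ A ∪ B ∪ D → ∀ a ∈ (WithLp.toLp 2 ⁻¹' X : Set (Fin n → ℝ)),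
      ∀ i, |a i| ≤ R := by
    intro X hX a ha i
    have h1 := hR _ (hX ha)
    have h2 := PiLp.norm_apply_le (WithLp.toLp 2 a : E n) i
    exact h2.trans h1
  have m : ∀ X : Set (E n), IsCompact X → MeasurableSet (WithLp.toLp 2 ⁻¹' X : Set (Fin n → ℝ)) :=
    fun X hX => e.measurable hX.measurableSet
  have := bm R _ _ _ (m A hA) (m B hB) (m D hD) (hb A (by intro x; simp; tauto))
    (hb B (by intro x; simp; tauto)) (hb D Set.subset_union_right) (by
      intro a ha b hb
      exact h _ ha _ hb)
  rwa [e.measure_preimage hA.measurableSet.nullMeasurableSet,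
    e.measure_preimage hB.measurableSet.nullMeasurableSet,
    e.measure_preimage hD.measurableSet.nullMeasurableSet] at this

theorem inter_le {n : ℕ} (K C : Set (E n))
    (hKcomp : IsCompact K) (hKconv : Convex ℝ K)
    (hCcomp : IsCompact C) (hCconv : Convex ℝ C)
    (hKsymm : K = -K) (hCsymm : C = -C) (x : E n) :
    volume (K ∩ ({x} + C)) ≤ volume (K ∩ C) := by
  have hM : IsCompact (K ∩ ({x} + C)) := hKcomp.inter (isCompact_singleton.add hCcomp)
  have := bmE (K ∩ ({x} + C)) (-(K ∩ ({x} + C))) (K ∩ C) hM hM.neg (hKcomp.inter hCcomp) (by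
    rintro a ⟨ha, ha'⟩ b ⟨hb, hb'⟩
    rw [Set.singleton_add] at ha' hb'
    obtain ⟨c, hc, rfl⟩ := ha'
    obtain ⟨d, hd, hd'⟩ := hb'
    have hbK : b ∈ K := by rw [hKsymm]; exact hb
    have hdC : -d ∈ C := by rw [hCsymm]; simpa using hd
    constructor
    · rw [smul_add]
      exact hKconv ha hbK (by norm_num) (by norm_num) (by norm_num)
    · have h1 := hCconv hc hdC (a := 1/2) (b := 1/2) (by norm_num) (by norm_num) (by norm_num)
      have : b = -(x + d) := by simp only at hd'; rw [hd']; simp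
      rw [this]
      convert h1 using 1
      rw [← smul_add]; congr 1; simp only; abel)
  rw [Measure.measure_neg, ← sq] at this
  exact (ENNReal.pow_le_pow_left_iff two_ne_zero).1 this

/-- If `K` and `C` are `o`-symmetric convex bodies in `ℝⁿ` with `|C| = |K|`, then
`A(K,C) = |K Δ C| / |K|`; i.e. the minimum defining the homothetic distance is
attained at `x = 0`. -/
theorem homDist_eq_of_symmetric {n : ℕ}
    (K C : Set (EuclideanSpace ℝ (Fin n)))
    (hKcomp : IsCompact K) (hKconv : Convex ℝ K) (hKint : (interior K).Nonempty)
    (hCcomp : IsCompact C) (hCconv : Convex ℝ C) (hCint : (interior C).Nonempty)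
    (hKsymm : K = -K) (hCsymm : C = -C)
    (hvol : volume C = volume K) :
    homDist K C = (volume (symmDiff K C)).toReal / (volume K).toReal := by
  have hKfin := hKcomp.measure_lt_top (μ := (volume : Measure (E n))) |>.ne
  have hKpos : volume K ≠ 0 := (Measure.measure_pos_of_nonempty_interior _ hKint).ne'
  set v := (volume K).toReal with hv
  have v0 : 0 < v := ENNReal.toReal_pos hKpos hKfin
  set α := v ^ (-(1:ℝ)/(n:ℝ)) with hα
  have α0 : 0 < α := Real.rpow_pos_of_pos v0 _
  have hαn : α ^ n = v⁻¹ := by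
    rcases Nat.eq_zero_or_pos n with rfl | hn
    · have : K = Set.univ := by
        obtain ⟨a, ha⟩ := hKint
        exact Set.eq_univ_of_forall fun x => by
          rw [Subsingleton.elim x a]; exact interior_subset ha
      have : v = 1 := by
        rw [hv, this, ← (PiLp.volume_preserving_toLp (Fin 0)).measure_preimage
          MeasurableSet.univ.nullMeasurableSet]
        rw [Set.preimage_univ, volume_pi, Measure.pi_empty_univ]; simp
      simp [this]
    · rw [hα, ← Real.rpow_natCast, ← Real.rpow_mul v0.le]
      have : (-(1:ℝ)/(n:ℝ)) * n = -1 := by field_simp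
      rw [this, Real.rpow_neg_one]
  have meq : ∀ x : E n, (volume (symmDiff (α • K) ({x} + α • C))).toReal
      = (volume (symmDiff K ({α⁻¹ • x} + C))).toReal / v := by
    intro x
    have h1 : symmDiff (α • K) ({x} + α • C) = α • symmDiff K ({α⁻¹ • x} + C) := by
      rw [Set.smul_set_symmDiff₀ α0.ne', smul_add, Set.smul_set_singleton,
        smul_inv_smul₀ α0.ne']
    rw [h1, Measure.addHaar_smul, ENNReal.toReal_mul, finrank_euclideanSpace_fin, hαn,
      abs_of_pos (by positivity), ENNReal.toReal_ofReal (by positivity)]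
    ring
  have sd : ∀ y : E n, (volume (symmDiff K ({y} + C))).toReal
      = 2 * v - 2 * (volume (K ∩ ({y} + C))).toReal := by
    intro y
    have hyC : IsCompact ({y} + C) := isCompact_singleton.add hCcomp
    have hy : volume ({y} + C) = volume K := by
      rw [Set.singleton_add, Set.image_add_left, measure_preimage_add, hvol]
    have hyf := hyC.measure_lt_top (μ := (volume : Measure (E n))) |>.ne
    have h1 := measureReal_symmDiff_eq (μ := volume) hKcomp.measurableSet
      hyC.measurableSet hKfin hyf
    have h2 := measureReal_sdiff_add_inter (μ := volume) (s := K) (t := {y} + C)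
      hyC.measurableSet hKfin
    have h3 := measureReal_sdiff_add_inter (μ := volume) (s := {y} + C) (t := K)
      hKcomp.measurableSet hyf
    rw [Set.inter_comm] at h3
    simp only [measureReal_def, hy] at h1 h2 h3
    rw [h1]
    linarith
  have z : ({(0 : E n)} + C) = C := by simp
  have hle : ∀ y : E n, (volume (symmDiff K C)).toReal
      ≤ (volume (symmDiff K ({y} + C))).toReal := by
    intro y
    have s0 := sd 0
    rw [z] at s0
    rw [s0, sd y]
    have := ENNReal.toReal_mono
      (ne_top_of_le_ne_top hKfin (measure_mono Set.inter_subset_left))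
      (inter_le K C hKcomp hKconv hCcomp hCconv hKsymm hCsymm y)
    linarith
  unfold homDist
  rw [hvol, ← hv, ← hα]
  apply IsLeast.csInf_eq
  refine ⟨⟨0, ?_⟩, ?_⟩
  · rw [meq, smul_zero, z]
  · rintro r ⟨x, rfl⟩
    rw [meq]
    exact div_le_div_of_nonneg_right (hle _) v0.le
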